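/- Let Σ be a symmetric positive definite p×p real matrix with (symmetric positive definite) square root Σ^{1/2}, let A be a symmetric p×p real matrix with AΣ ≠ 0, and set M = Σ^{1/2} A Σ^{1/2}. Then for every K ∈ (0,1) and every real t with |t| < K/‖AΣ‖_∞, the matrix I_p − tM is invertible and det(I_p − tM)^{−1} ≤ exp( t·Tr(AΣ) + t²‖AΣ‖_F²/(2(1−K)) ). -/

import Mathlib

open MeasureTheory Matrix Real
open scoped ENNReal BigOperators NNReal

noncomputable def gaussianPDF {p : ℕ} (C : Matrix (Fin p) (Fin p) ℝ) (x : Fin p → ℝ) : ℝ≥0∞ :=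
  ENNReal.ofReal ((2 * Real.pi) ^ (-(p : ℝ) / 2) * C.det ^ (-(1:ℝ)/2) *
    Real.exp (-(1/2) * (x ⬝ᵥ C⁻¹.mulVec x)))

/-- The centered multivariate Gaussian measure `N_p(0, C)` on `Fin p → ℝ`. -/
noncomputable def gaussianMeasure {p : ℕ} (C : Matrix (Fin p) (Fin p) ℝ) :
    Measure (Fin p → ℝ) :=
  MeasureTheory.volume.withDensity (gaussianPDF C)

/-- The law of `n` i.i.d. `N_p(0, C)` vectors. -/
noncomputable def iidGaussian (n p : ℕ) (C : Matrix (Fin p) (Fin p) ℝ) :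
    Measure (Fin n → Fin p → ℝ) :=
  MeasureTheory.volume.withDensity fun X => ∏ k, gaussianPDF C (X k)

/-- The sample covariance matrix `Σ_n = (1/n) ∑ X_k X_kᵀ`. -/
noncomputable def sampleCov {n p : ℕ} (X : Fin n → Fin p → ℝ) :
    Matrix (Fin p) (Fin p) ℝ :=
  (n : ℝ)⁻¹ • ∑ k, Matrix.of fun i j => X k i * X k j

/-- Frobenius norm of a matrix. -/
noncomputable def frobNorm {p : ℕ} (M : Matrix (Fin p) (Fin p) ℝ) : ℝ :=
  Real.sqrt (∑ i, ∑ j, (M i j)^2)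

/-- Spectral (ℓ²-operator) norm of a matrix. -/
noncomputable def specNorm {p : ℕ} (M : Matrix (Fin p) (Fin p) ℝ) : ℝ :=
  ‖Matrix.toEuclideanCLM (𝕜 := ℝ) M‖

/-- The matrix `A_j` with entries `1/(2(p-j))` on the `j`-th upper and lower diagonals. -/
noncomputable def lagMatrix (p j : ℕ) : Matrix (Fin p) (Fin p) ℝ :=
  Matrix.of fun k l => if ((k:ℤ) - (l:ℤ)).natAbs = j then 1/(2*((p:ℝ) - j)) else 0

/-- Two-sided class `F(s,S,σ)` of sparse Toeplitz covariance matrices with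
diagonal value `σ0`. -/
def memF (p s S : ℕ) (σ σ0 : ℝ) (C : Matrix (Fin p) (Fin p) ℝ) : Prop :=
  C.PosDef ∧ ∃ v : ℕ → ℝ, v 0 = σ0 ∧
    (∀ i j : Fin p, C i j = v ((i:ℤ) - (j:ℤ)).natAbs) ∧
    ∃ T : Finset ℕ, T ⊆ Finset.Icc 1 S ∧ T.card = s ∧
      (∀ j ∈ T, σ ≤ |v j|) ∧ (∀ j, 1 ≤ j → j ≤ p - 1 → j ∉ T → v j = 0)

/-- One-sided class `F₊(s,S,σ)` of sparse Toeplitz covariance matrices with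
diagonal value `σ0`. -/
def memFplus (p s S : ℕ) (σ σ0 : ℝ) (C : Matrix (Fin p) (Fin p) ℝ) : Prop :=
  C.PosDef ∧ ∃ v : ℕ → ℝ, v 0 = σ0 ∧
    (∀ i j : Fin p, C i j = v ((i:ℤ) - (j:ℤ)).natAbs) ∧
    ∃ T : Finset ℕ, T ⊆ Finset.Icc 1 S ∧ T.card = s ∧
      (∀ j ∈ T, σ ≤ v j) ∧ (∀ j, 1 ≤ j → j ≤ p - 1 → j ∉ T → v j = 0)

/-!
Write `t R A R = X Y` with `X = t R` and `Y = A R`. This matrix is symmetric, so `det (1 - X Y)⁻¹`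
is the product of `(1 - λ)⁻¹` over its eigenvalues, and `(1 - λ)⁻¹ ≤ exp (λ + λ² / (2 (1 - K)))` for
`λ ≤ K` bounds this product by `exp (Tr (X Y) + Tr (X Y)² / (2 (1 - K)))`. Swapping `X` and `Y`
changes neither the traces nor the nonzero spectrum, so `X Y` may be replaced by `Y X = t A Σ`. That
matrix need not be symmetric, but `Tr B² ≤ Tr (Bᵀ B) = ‖B‖_F²` and `|λ| ≤ ‖B‖_∞` hold for every
square matrix `B`.
-/

section ScalarBounds

variable {x K : ℝ}

lemma neg_log_one_sub_le_of_nonneg (hx₀ : 0 ≤ x) (hx₁ : x < 1) :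
    -log (1 - x) ≤ x + x ^ 2 / (2 * (1 - x)) := by
  have hpos : 0 < 1 - x := sub_pos.2 hx₁
  have hlog : 0 ≤ log (1 - x)⁻¹ := log_nonneg ((one_le_inv₀ hpos).2 (by linarith))
  calc -log (1 - x) = log (1 - x)⁻¹ := (log_inv _).symm
    _ ≤ sinh (log (1 - x)⁻¹) := self_le_sinh_iff.2 hlog
    _ = ((1 - x)⁻¹ - (1 - x)) / 2 := by rw [sinh_log (inv_pos.2 hpos), inv_inv]
    _ = x + x ^ 2 / (2 * (1 - x)) := by field_simp; ring

lemma neg_log_one_sub_le_of_nonpos (hx : x ≤ 0) : -log (1 - x) ≤ x + x ^ 2 / 2 := by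
  have hlog : 2 * -x / (-x + 2) ≤ log (1 - x) := by
    simpa only [← sub_eq_add_neg] using le_log_one_add_of_nonneg (neg_nonneg.2 hx)
  have hrat : -x - x ^ 2 / 2 ≤ 2 * -x / (-x + 2) := by
    rw [le_div_iff₀ (by linarith)]
    nlinarith [mul_nonneg (sq_nonneg x) (neg_nonneg.2 hx)]
  linarith

lemma neg_log_one_sub_le (hK₀ : 0 ≤ K) (hK₁ : K < 1) (hx : x ≤ K) :
    -log (1 - x) ≤ x + x ^ 2 / (2 * (1 - K)) := by
  have : 0 < 1 - K := sub_pos.2 hK₁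
  rcases le_total 0 x with hx₀ | hx₀
  · refine (neg_log_one_sub_le_of_nonneg hx₀ (hx.trans_lt hK₁)).trans ?_
    gcongr
  · refine (neg_log_one_sub_le_of_nonpos hx₀).trans ?_
    gcongr
    linarith

lemma inv_one_sub_le_exp (hK₀ : 0 ≤ K) (hK₁ : K < 1) (hx : x ≤ K) :
    (1 - x)⁻¹ ≤ exp (x + x ^ 2 / (2 * (1 - K))) := by
  have hpos : 0 < 1 - x := by linarith
  rw [← log_le_iff_le_exp (inv_pos.2 hpos), log_inv]
  exact neg_log_one_sub_le hK₀ hK₁ hx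

end ScalarBounds

section Commutation

variable {m n : Type*} [Fintype m] [Fintype n]

lemma trace_mul_mul_mul_self_comm {α : Type*} [NonUnitalCommSemiring α] (A : Matrix m n α)
    (B : Matrix n m α) : (A * B * (A * B)).trace = (B * A * (B * A)).trace := by
  rw [Matrix.mul_assoc, trace_mul_comm]
  simp only [Matrix.mul_assoc]

lemma mem_spectrum_mul_comm {𝕜 : Type*} [Field 𝕜] [DecidableEq m] [DecidableEq n]
    (A : Matrix m n 𝕜) (B : Matrix n m 𝕜) {r : 𝕜} (hr : r ≠ 0) :
    r ∈ spectrum 𝕜 (A * B) ↔ r ∈ spectrum 𝕜 (B * A) := by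
  have h := congrArg (Polynomial.eval r) (charpoly_mul_comm' A B)
  simp only [Polynomial.eval_mul, Polynomial.eval_pow, Polynomial.eval_X] at h
  rw [mem_spectrum_iff_isRoot_charpoly, mem_spectrum_iff_isRoot_charpoly, Polynomial.IsRoot,
    Polynomial.IsRoot, ← mul_eq_zero_iff_left (pow_ne_zero (Fintype.card n) hr), h,
    mul_eq_zero_iff_left (pow_ne_zero (Fintype.card m) hr)]

end Commutation

section Norms

lemma trace_mul_self_le_trace_transpose_mul_self {n : Type*} [Fintype n] (B : Matrix n n ℝ) :
    (B * B).trace ≤ (Bᵀ * B).trace := by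
  have hnonneg : 0 ≤ ((B - Bᵀ)ᵀ * (B - Bᵀ)).trace := by
    simpa using (posSemidef_conjTranspose_mul_self (B - Bᵀ)).trace_nonneg
  have hexpand : ((B - Bᵀ)ᵀ * (B - Bᵀ)).trace = 2 * ((Bᵀ * B).trace - (B * B).trace) := by
    have hBt : (Bᵀ * Bᵀ).trace = (B * B).trace := by rw [← transpose_mul, trace_transpose]
    simp only [transpose_sub, transpose_transpose, sub_mul, mul_sub, trace_sub, hBt,
      trace_mul_comm B Bᵀ]
    ring
  linarith

variable {p : ℕ} (B : Matrix (Fin p) (Fin p) ℝ)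

lemma frobNorm_sq : frobNorm B ^ 2 = (Bᵀ * B).trace := by
  rw [frobNorm, sq_sqrt (by positivity), Finset.sum_comm]
  simp only [trace, diag_apply, mul_apply, transpose_apply, sq]

lemma trace_mul_self_le_frobNorm_sq : (B * B).trace ≤ frobNorm B ^ 2 :=
  (trace_mul_self_le_trace_transpose_mul_self B).trans_eq (frobNorm_sq B).symm

lemma frobNorm_smul (t : ℝ) : frobNorm (t • B) = |t| * frobNorm B := by
  simp only [frobNorm, Matrix.smul_apply, smul_eq_mul, mul_pow, ← Finset.mul_sum]
  rw [sqrt_mul (sq_nonneg t), sqrt_sq_eq_abs]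

lemma specNorm_nonneg : 0 ≤ specNorm B :=
  norm_nonneg _

lemma specNorm_smul (t : ℝ) : specNorm (t • B) = |t| * specNorm B := by
  rw [specNorm, map_smul, norm_smul, norm_eq_abs, specNorm]

variable {B} in
lemma abs_le_specNorm_of_mem_spectrum {r : ℝ} (hr : r ∈ spectrum ℝ B) : |r| ≤ specNorm B := by
  rw [← AlgEquiv.spectrum_eq (toEuclideanCLM (n := Fin p) (𝕜 := ℝ))] at hr
  exact (spectrum.norm_le_norm_mul_of_mem hr).trans
    (mul_le_of_le_one_right (norm_nonneg _) ContinuousLinearMap.norm_id_le)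

end Norms

section Hermitian

variable {n : Type*} [Fintype n] [DecidableEq n] {M : Matrix n n ℝ} {K : ℝ}

lemma det_one_sub_eq_prod_eigenvalues (hM : M.IsHermitian) :
    (1 - M).det = ∏ i, (1 - hM.eigenvalues i) := by
  have h := congrArg (Polynomial.eval 1) hM.charpoly_eq
  simpa [eval_charpoly, Polynomial.eval_prod] using h

lemma trace_mul_self_eq_sum_sq_eigenvalues (hM : M.IsHermitian) :
    (M * M).trace = ∑ i, hM.eigenvalues i ^ 2 := by
  conv_lhs => rw [hM.spectral_theorem]
  rw [← map_mul, Unitary.conjStarAlgAut_apply, trace_mul_cycle, Unitary.coe_star_mul_self, one_mul]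
  simp [diagonal_mul_diagonal, sq]

lemma det_one_sub_pos (hM : M.IsHermitian) (hspec : ∀ r ∈ spectrum ℝ M, r < 1) :
    0 < (1 - M).det := by
  rw [det_one_sub_eq_prod_eigenvalues hM]
  exact Finset.prod_pos fun i _ => sub_pos.2 (hspec _ (hM.eigenvalues_mem_spectrum_real i))

lemma inv_det_one_sub_le_exp_trace (hM : M.IsHermitian) (hK₀ : 0 ≤ K) (hK₁ : K < 1)
    (hspec : ∀ r ∈ spectrum ℝ M, r ≤ K) :
    (1 - M).det⁻¹ ≤ exp (M.trace + (M * M).trace / (2 * (1 - K))) := by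
  have heig (i : n) : hM.eigenvalues i ≤ K := hspec _ (hM.eigenvalues_mem_spectrum_real i)
  calc (1 - M).det⁻¹ = ∏ i, (1 - hM.eigenvalues i)⁻¹ := by
        rw [det_one_sub_eq_prod_eigenvalues hM, Finset.prod_inv_distrib]
    _ ≤ ∏ i, exp (hM.eigenvalues i + hM.eigenvalues i ^ 2 / (2 * (1 - K))) :=
        Finset.prod_le_prod (fun i _ => inv_nonneg.2 (by linarith [heig i]))
          fun i _ => inv_one_sub_le_exp hK₀ hK₁ (heig i)
    _ = exp (M.trace + (M * M).trace / (2 * (1 - K))) := by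
        rw [← exp_sum, Finset.sum_add_distrib, ← Finset.sum_div, hM.trace_eq_sum_eigenvalues,
          trace_mul_self_eq_sum_sq_eigenvalues hM]
        simp only [RCLike.ofReal_real_eq_id, id_eq]

end Hermitian

section SwappedFactors

variable {n : Type*} [Fintype n] [DecidableEq n] {p : ℕ} {X : Matrix n (Fin p) ℝ}
  {Y : Matrix (Fin p) n ℝ}

lemma abs_le_specNorm_mul_of_mem_spectrum_mul {r : ℝ} (hr : r ∈ spectrum ℝ (X * Y)) :
    |r| ≤ specNorm (Y * X) := by
  rcases eq_or_ne r 0 with rfl | hr₀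
  · simpa only [abs_zero] using specNorm_nonneg (Y * X)
  · exact abs_le_specNorm_of_mem_spectrum ((mem_spectrum_mul_comm X Y hr₀).1 hr)

lemma det_one_sub_mul_bound (hXY : (X * Y).IsHermitian) {K : ℝ} (hK : K < 1)
    (hYX : specNorm (Y * X) ≤ K) :
    IsUnit (1 - X * Y) ∧
      (1 - X * Y).det⁻¹ ≤ exp ((Y * X).trace + frobNorm (Y * X) ^ 2 / (2 * (1 - K))) := by
  have : 0 < 1 - K := sub_pos.2 hK
  have hspec : ∀ r ∈ spectrum ℝ (X * Y), r ≤ K := fun r hr =>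
    (le_abs_self r).trans ((abs_le_specNorm_mul_of_mem_spectrum_mul hr).trans hYX)
  have hdet : 0 < (1 - X * Y).det := det_one_sub_pos hXY fun r hr => (hspec r hr).trans_lt hK
  refine ⟨(isUnit_iff_isUnit_det _).2 hdet.ne'.isUnit, ?_⟩
  calc (1 - X * Y).det⁻¹
      ≤ exp ((X * Y).trace + (X * Y * (X * Y)).trace / (2 * (1 - K))) :=
        inv_det_one_sub_le_exp_trace hXY ((specNorm_nonneg _).trans hYX) hK hspec
    _ = exp ((Y * X).trace + (Y * X * (Y * X)).trace / (2 * (1 - K))) := by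
        rw [trace_mul_comm, trace_mul_mul_mul_self_comm]
    _ ≤ exp ((Y * X).trace + frobNorm (Y * X) ^ 2 / (2 * (1 - K))) := by
        gcongr
        exact trace_mul_self_le_frobNorm_sq _

theorem det_one_sub_smul_bound_general (hXY : (X * Y).IsHermitian) {K t : ℝ} (hK : K < 1)
    (ht : |t| * specNorm (Y * X) ≤ K) :
    IsUnit (1 - t • (X * Y)) ∧
      (1 - t • (X * Y)).det⁻¹ ≤
        exp (t * (Y * X).trace + t ^ 2 * frobNorm (Y * X) ^ 2 / (2 * (1 - K))) := by
  have hsymm : (t • X * Y).IsHermitian := by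
    simpa only [Matrix.smul_mul] using hXY.smul (IsSelfAdjoint.all t)
  have hnorm : specNorm (Y * t • X) ≤ K := by rwa [Matrix.mul_smul, specNorm_smul]
  simpa only [Matrix.smul_mul, Matrix.mul_smul, trace_smul, smul_eq_mul, frobNorm_smul, mul_pow,
    sq_abs] using det_one_sub_mul_bound hsymm hK hnorm

end SwappedFactors

/-- Determinant bound for `I − tM`, `M = Σ^{1/2} A Σ^{1/2}`. -/
theorem det_one_sub_smul_bound {p : ℕ}
    (Cov R A : Matrix (Fin p) (Fin p) ℝ) (hCov : Cov.PosDef)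
    (hR : R.PosDef) (hRR : R * R = Cov)
    (hA : A.IsSymm) (hAC : A * Cov ≠ 0)
    (K t : ℝ) (hK : K ∈ Set.Ioo (0:ℝ) 1) (ht : |t| < K / specNorm (A * Cov)) :
    IsUnit ((1 : Matrix (Fin p) (Fin p) ℝ) - t • (R * A * R)) ∧
    (((1 : Matrix (Fin p) (Fin p) ℝ) - t • (R * A * R)).det)⁻¹ ≤
      Real.exp (t * Matrix.trace (A * Cov) +
        t^2 * (frobNorm (A * Cov))^2 / (2 * (1 - K))) := by
  subst hRR
  have hRAR : (R * (A * R)).IsHermitian := by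
    simpa only [hR.isHermitian.eq, Matrix.mul_assoc] using
      isHermitian_mul_mul_conjTranspose R ((conjTranspose_eq_transpose_of_trivial A).trans hA)
  have htK : |t| * specNorm (A * R * R) ≤ K := by
    rw [Matrix.mul_assoc]
    exact mul_le_of_le_div₀ hK.1.le (specNorm_nonneg _) ht.le
  simpa only [Matrix.mul_assoc] using det_one_sub_smul_bound_general hRAR hK.2 htK
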